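/- Let $(D,C)$ be a tiling of $\mathbb{F}_2^n$ and suppose $D=B_d(0,r)$ for some TS-metric $d$ on $\mathbb{F}_2^n$ and some $r>0$. Then $D$ is a polyhedromino: any two points of $D$ are joined by a geodesic path (with respect to the Hamming distance) entirely contained in $D$. -/

import Mathlib

abbrev V (n : ℕ) := Fin n → ZMod 2

/-- The support of a vector. -/
def supp {n : ℕ} (x : V n) : Set (Fin n) := {i | x i ≠ 0}

/-- `d` is a metric on `𝔽₂ⁿ`. -/
def IsMetric {n : ℕ} (d : V n → V n → ℝ) : Prop :=
  (∀ x y, 0 ≤ d x y) ∧ (∀ x y, d x y = 0 ↔ x = y) ∧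
  (∀ x y, d x y = d y x) ∧ (∀ x y z, d x z ≤ d x y + d y z)

/-- `d` is translation-invariant. -/
def TransInv {n : ℕ} (d : V n → V n → ℝ) : Prop :=
  ∀ x y z : V n, d (x + z) (y + z) = d x y

/-- The weight of `d` respects supports. -/
def RespectsSupport {n : ℕ} (d : V n → V n → ℝ) : Prop :=
  ∀ x y : V n, supp x ⊆ supp y → d x 0 ≤ d y 0

/-- A TS-metric: a translation-invariant metric respecting supports. -/
def IsTSMetric {n : ℕ} (d : V n → V n → ℝ) : Prop :=
  IsMetric d ∧ TransInv d ∧ RespectsSupport d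

/-- The ball of center `x` and radius `r`. -/
def ball {n : ℕ} (d : V n → V n → ℝ) (x : V n) (r : ℝ) : Set (V n) :=
  {y | d x y ≤ r}

/-- `(D, C)` is a tiling of `𝔽₂ⁿ`. -/
def IsTiling {n : ℕ} (D C : Set (V n)) : Prop :=
  (⋃ c ∈ C, (fun x => c + x) '' D) = Set.univ ∧
  C.PairwiseDisjoint (fun c => (fun x => c + x) '' D)

/-- `γ` is a geodesic path of length `t` (for the Hamming distance). -/
def IsGeodesic {n : ℕ} (γ : ℕ → V n) (t : ℕ) : Prop :=
  (∀ i < t, hammingDist (γ i) (γ (i + 1)) = 1) ∧ hammingDist (γ 0) (γ t) = t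

/-- A polyhedromino: a nonempty set any two points of which are connected by a
geodesic path contained in the set. -/
def IsPolyhedromino {n : ℕ} (D : Set (V n)) : Prop :=
  D.Nonempty ∧ ∀ x ∈ D, ∀ y ∈ D, ∃ (t : ℕ) (γ : ℕ → V n),
    IsGeodesic γ t ∧ γ 0 = x ∧ γ t = y ∧ ∀ i ≤ t, γ i ∈ D

/-! While `x ≠ y`, some coordinate where they differ can be changed in `x` to its value in `y`
without leaving a set that is closed under shrinking supports: if `x i ≠ 0` at such a coordinate,
the change keeps the support inside that of `x`; if `x` vanishes wherever it differs from `y`, then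
any such change keeps the support inside that of `y`. Each change decreases the Hamming distance
to `y` by one, so the successive changes form a geodesic. -/

section Hamming

variable {ι : Type*} [Fintype ι] [DecidableEq ι] {β : ι → Type*} [∀ i, DecidableEq (β i)]

theorem hammingDist_update_right {x : ∀ i, β i} {i : ι} {a : β i} (h : x i ≠ a) :
    hammingDist x (Function.update x i a) = 1 := by
  have hdiff : ({j | x j ≠ Function.update x i a j} : Finset ι) = {i} := by
    ext j
    rcases eq_or_ne j i with rfl | hj <;> simp [*]
  rw [hammingDist, hdiff, Finset.card_singleton]

theorem hammingDist_update_left_add_one {x y : ∀ i, β i} {i : ι} (h : x i ≠ y i) :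
    hammingDist (Function.update x i (y i)) y + 1 = hammingDist x y := by
  have hdiff : ({j | Function.update x i (y i) j ≠ y j} : Finset ι) =
      ({j | x j ≠ y j} : Finset ι).erase i := by
    ext j
    rcases eq_or_ne j i with rfl | hj <;> simp [*]
  rw [hammingDist, hdiff, Finset.card_erase_add_one (by simpa using h), hammingDist]

end Hamming

section SupportClosed

variable {ι M : Type*} [Zero M]

/-- A down-set for the inclusion of supports: any vector whose support is contained in the support
of a member is a member. These are the sets to which the geodesic construction applies. -/
def IsSupportClosed (D : Set (ι → M)) : Prop :=
  ∀ ⦃x y : ι → M⦄, Function.support x ⊆ Function.support y → y ∈ D → x ∈ D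

theorem support_update_subset_iff [DecidableEq ι] {x : ι → M} {i : ι} {a : M} {s : Set ι} :
    Function.support (Function.update x i a) ⊆ s ↔
      (a ≠ 0 → i ∈ s) ∧ ∀ j, j ≠ i → x j ≠ 0 → j ∈ s := by
  simp only [Set.subset_def, Function.mem_support]
  exact Function.forall_update_iff x (p := fun j b ↦ b ≠ 0 → j ∈ s)

theorem IsSupportClosed.exists_update_mem [DecidableEq ι] {D : Set (ι → M)}
    (hD : IsSupportClosed D) {x y : ι → M} (hx : x ∈ D) (hy : y ∈ D) (hxy : x ≠ y) :
    ∃ i, x i ≠ y i ∧ Function.update x i (y i) ∈ D := by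
  by_cases hzero : ∃ i, x i ≠ y i ∧ x i ≠ 0
  · obtain ⟨i, hi, hxi⟩ := hzero
    exact ⟨i, hi, hD (support_update_subset_iff.2 ⟨fun _ ↦ hxi, fun _ _ hj ↦ hj⟩) hx⟩
  · obtain ⟨i, hi⟩ := Function.ne_iff.1 hxy
    have hagree : ∀ j, x j ≠ 0 → x j = y j := fun j hj ↦
      by_contra fun hne ↦ hzero ⟨j, hne, hj⟩
    exact ⟨i, hi, hD (support_update_subset_iff.2
      ⟨id, fun j _ hj ↦ Function.mem_support.2 (hagree j hj ▸ hj)⟩) hy⟩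

end SupportClosed

section Polyhedromino

variable {n : ℕ}

theorem IsGeodesic.cons {γ : ℕ → V n} {t : ℕ} {x : V n} (hγ : IsGeodesic γ t)
    (hstep : hammingDist x (γ 0) = 1) (hdist : hammingDist x (γ t) = t + 1) :
    IsGeodesic (fun k ↦ Nat.casesOn k x γ) (t + 1) :=
  ⟨fun
    | 0, _ => hstep
    | k + 1, hk => hγ.1 k (Nat.lt_of_succ_lt_succ hk), hdist⟩

theorem exists_isGeodesic_of_exists_update_mem {D : Set (V n)} {y : V n}
    (hupdate : ∀ x ∈ D, x ≠ y → ∃ i, x i ≠ y i ∧ Function.update x i (y i) ∈ D)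
    {x : V n} (hx : x ∈ D) :
    ∃ (t : ℕ) (γ : ℕ → V n), IsGeodesic γ t ∧ γ 0 = x ∧ γ t = y ∧ ∀ i ≤ t, γ i ∈ D := by
  induction h : hammingDist x y generalizing x with
  | zero =>
    exact ⟨0, fun _ ↦ x, ⟨by simp, hammingDist_self x⟩, rfl, hammingDist_eq_zero.1 h,
      fun _ _ ↦ hx⟩
  | succ s ih =>
    obtain ⟨i, hi, hmem⟩ := hupdate x hx (hammingDist_ne_zero.1 (by omega))
    have hdist := hammingDist_update_left_add_one hi
    obtain ⟨t, γ, hγ, hγ₀, rfl, hγD⟩ := ih hmem (by omega)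
    have hstep : hammingDist x (γ 0) = 1 := hγ₀ ▸ hammingDist_update_right hi
    have hlength : hammingDist x (γ t) = t + 1 := by rw [← hdist, ← hγ₀, hγ.2]
    refine ⟨t + 1, _, hγ.cons hstep hlength, rfl, rfl, ?_⟩
    rintro (_ | k) hk
    exacts [hx, hγD k (Nat.le_of_succ_le_succ hk)]

theorem IsSupportClosed.isPolyhedromino {D : Set (V n)} (hD : IsSupportClosed D)
    (hne : D.Nonempty) : IsPolyhedromino D :=
  ⟨hne, fun _ hx _ hy ↦ exists_isGeodesic_of_exists_update_mem
    (fun _ hz hzy ↦ hD.exists_update_mem hz hy hzy) hx⟩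

theorem RespectsSupport.isSupportClosed_ball {d : V n → V n → ℝ} (hd : RespectsSupport d)
    (hsymm : ∀ x, d 0 x = d x 0) (r : ℝ) : IsSupportClosed (ball d 0 r) := by
  intro x y hxy hy
  calc d 0 x = d x 0 := hsymm x
    _ ≤ d y 0 := hd x y hxy
    _ = d 0 y := (hsymm y).symm
    _ ≤ r := hy

theorem stmt_1_general (d : V n → V n → ℝ) (r : ℝ) (hd : RespectsSupport d)
    (hsymm : ∀ x, d 0 x = d x 0) (hr : d 0 0 ≤ r) : IsPolyhedromino (ball d 0 r) :=
  (hd.isSupportClosed_ball hsymm r).isPolyhedromino ⟨0, hr⟩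

end Polyhedromino

theorem stmt_1 {n : ℕ} (D C : Set (V n)) (d : V n → V n → ℝ) (r : ℝ)
    (htiling : IsTiling D C) (hd : IsTSMetric d) (hr : 0 < r)
    (hD : D = ball d 0 r) :
    IsPolyhedromino D := by
  obtain ⟨⟨-, hzero, hsymm, -⟩, -, hsupp⟩ := hd
  exact hD ▸ stmt_1_general d r hsupp (hsymm 0) (((hzero 0 0).2 rfl).trans_le hr.le)
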